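/- Let Ω ⊂ ℝ² be a bounded open set with boundary of class C². Then there exist constants C > 0 and s₀ > 0, depending only on Ω, such that for every function u continuously differentiable on the closure of Ω with ‖u‖_{H¹} := (∫_Ω u² dx + ∫_Ω |∇u|² dx)^{1/2} ≤ s₀, one has ∑_{k=3}^{∞} (1/k!)∫_Ω |u(x)|^k dx ≤ C·‖u‖_{H¹}³; in particular |∫_Ω (e^u − 1 − u − u²/2) dx| ≤ C·‖u‖_{H¹}³. -/

import Mathlib

open MeasureTheory Bornology

/-- `g` is a local `C²` defining function for `Ω` near the boundary point `x`. -/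
def IsC2LocalDefining {N : ℕ} (Ω : Set (EuclideanSpace ℝ (Fin N)))
    (x : EuclideanSpace ℝ (Fin N)) (U : Set (EuclideanSpace ℝ (Fin N)))
    (g : EuclideanSpace ℝ (Fin N) → ℝ) : Prop :=
  IsOpen U ∧ x ∈ U ∧ ContDiffOn ℝ 2 g U ∧ (∀ y ∈ U, gradient g y ≠ 0) ∧
    Ω ∩ U = {y ∈ U | g y < 0}

/-- The Sobolev-type norm `‖u‖_{H¹} = (∫_Ω u² + ∫_Ω |∇u|²)^{1/2}`. -/
noncomputable def H1norm (Ω : Set (EuclideanSpace ℝ (Fin 2)))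
    (u : EuclideanSpace ℝ (Fin 2) → ℝ) : ℝ :=
  Real.sqrt ((∫ x in Ω, u x ^ 2) + ∫ x in Ω, ‖gradient u x‖ ^ 2)

/-!
Near a boundary point, strict differentiability of a defining function `g` shows that every
direction in the open half-space `{v | Dg v < 0}` stays in `Ω` for a short time, uniformly in the
starting point, and this half-space contains a basis. Averaging along each basis direction bounds
`|w|` by the integral of `|w| + |Dw|` over a full line, so the grid-lines inequality behind the
Gagliardo–Nirenberg–Sobolev theorem gives the embedding of `W^{1,1}(Ω)` into `L²(Ω)` in the plane,
without extension operators. Applied to `w = u^{n+1}` and combined with Cauchy–Schwarz, it bounds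
`∫ |u|^{2(n+1)}` by `C (n+1)² ‖u‖² ∫ |u|^{2n}`. Iterating, `∫ |u|^k ≤ (C ‖u‖)^k k!`, so the series
is dominated by a geometric one once `C ‖u‖ ≤ 1/2`.
-/

open scoped ENNReal NNReal Topology
open Filter Module

section SobolevEmbedding

variable {E F : Type*} [NormedAddCommGroup E] [NormedSpace ℝ E]
  [NormedAddCommGroup F] [NormedSpace ℝ F]

/-- The vector `v` points into `Ω` near `x`, uniformly: moving a short time along `v` from any point
of `Ω` close to `x` does not leave `Ω`. -/
def IsInwardDirection (Ω : Set E) (x v : E) : Prop :=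
  ∀ᶠ p : E × ℝ in 𝓝[Ω] x ×ˢ 𝓝[≥] 0, p.1 + p.2 • v ∈ Ω

theorem isInwardDirection_of_mem {Ω : Set E} (hΩ : IsOpen Ω) {x : E} (hx : x ∈ Ω) (v : E) :
    IsInwardDirection Ω x v := by
  have hlim : Tendsto (fun p : E × ℝ => p.1 + p.2 • v) (𝓝 (x, 0)) (𝓝 x) :=
    Continuous.tendsto' (by fun_prop) _ _ (by simp)
  rw [nhds_prod_eq] at hlim
  exact (hlim.mono_left (prod_mono nhdsWithin_le_nhds nhdsWithin_le_nhds)).eventually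
    (hΩ.mem_nhds hx)

theorem isInwardDirection_of_hasStrictFDerivAt {Ω U : Set E} {x v : E} {g : E → ℝ} {g' : E →L[ℝ] ℝ}
    (hU : U ∈ 𝓝 x) (hΩ : Ω ∩ U = {y ∈ U | g y < 0}) (hg : HasStrictFDerivAt g g' x)
    (hv : g' v < 0) : IsInwardDirection Ω x v := by
  have hlim : Tendsto (fun p : E × ℝ => (p.1 + p.2 • v, p.1)) (𝓝[Ω] x ×ˢ 𝓝[≥] 0) (𝓝 (x, x)) := by
    have : Tendsto (fun p : E × ℝ => (p.1 + p.2 • v, p.1)) (𝓝 (x, 0)) (𝓝 (x, x)) :=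
      Continuous.tendsto' (by fun_prop) _ _ (by simp)
    rw [nhds_prod_eq] at this
    exact this.mono_left (prod_mono nhdsWithin_le_nhds nhdsWithin_le_nhds)
  have hv0 : 0 < ‖v‖ := norm_pos_iff.2 (by rintro rfl; simp at hv)
  have hdecrease := hlim.eventually (hg.isLittleO.bound (div_pos (neg_pos.2 hv) hv0))
  have hmemU := hlim.eventually (prod_mem_nhds hU hU)
  have hstart : ∀ᶠ p : E × ℝ in 𝓝[Ω] x ×ˢ 𝓝[≥] 0, p.1 ∈ Ω ∧ 0 ≤ p.2 :=
    prod_mem_prod self_mem_nhdsWithin self_mem_nhdsWithin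
  filter_upwards [hdecrease, hmemU, hstart] with ⟨y, t⟩ hbound ⟨hytU, hyU⟩ ⟨hyΩ, ht⟩
  have hgy : g y < 0 := (hΩ.subset ⟨hyΩ, hyU⟩).2
  have hgyt : g (y + t • v) ≤ g y := by
    simp only [add_sub_cancel_left, map_smul, smul_eq_mul, norm_smul,
      Real.norm_of_nonneg ht] at hbound
    have hcancel : -g' v / ‖v‖ * (t * ‖v‖) = -(t * g' v) := by field_simp
    linarith [(le_abs_self _).trans (hbound.trans_eq hcancel)]
  exact (hΩ.superset ⟨hytU, hgyt.trans_lt hgy⟩).1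

theorem exists_nhdsWithin_forall_segment_mem {ι : Type*} [Finite ι] {Ω : Set E} {x : E} {v : ι → E}
    (hv : ∀ i, IsInwardDirection Ω x (v i)) :
    ∃ S ∈ 𝓝[Ω] x, ∃ h > (0 : ℝ), ∀ y ∈ S, ∀ i, ∀ t ∈ Set.Icc 0 h, y + t • v i ∈ Ω := by
  obtain ⟨S, hS, T, hT, hST⟩ := mem_prod_iff.1 (eventually_all.2 hv)
  obtain ⟨h, hh, hhT⟩ := mem_nhdsGE_iff_exists_Icc_subset.1 hT
  exact ⟨S, hS, h, hh, fun y hy i t ht => hST (Set.mk_mem_prod hy (hhT ht)) i⟩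

theorem exists_basis_isInwardDirection_of_mem_closure {ι : Type*} (b₀ : Basis ι ℝ E) {Ω : Set E}
    (hΩ : IsOpen Ω)
    (hfrontier : ∀ x ∈ frontier Ω, ∃ b : Basis ι ℝ E, ∀ i, IsInwardDirection Ω x (b i)) {x : E}
    (hx : x ∈ closure Ω) : ∃ b : Basis ι ℝ E, ∀ i, IsInwardDirection Ω x (b i) := by
  by_cases hxΩ : x ∈ Ω
  · exact ⟨b₀, fun i => isInwardDirection_of_mem hΩ hxΩ (b₀ i)⟩
  · exact hfrontier x (hΩ.frontier_eq ▸ ⟨hx, hxΩ⟩)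

theorem exists_basis_mem_of_isOpen [FiniteDimensional ℝ E] {n : ℕ} (hn : finrank ℝ E = n)
    {U : Set E} (hU : IsOpen U) (hne : U.Nonempty) : ∃ b : Basis (Fin n) ℝ E, ∀ i, b i ∈ U := by
  have hspan : Submodule.span ℝ U = ⊤ :=
    Submodule.eq_top_of_nonempty_interior' _ <|
      hne.mono <| interior_maximal Submodule.subset_span hU
  let b := Basis.ofSpan hspan.ge
  have := FiniteDimensional.fintypeBasisIndex b
  let e := Fintype.equivFinOfCardEq ((finrank_eq_card_basis b).symm.trans hn)
  exact ⟨b.reindex e, fun i => by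
    simpa [b, Basis.reindex_apply] using
      (Basis.ofSpan_subset hspan.ge) (Set.mem_range_self (e.symm i))⟩

theorem IsC2LocalDefining.exists_basis_isInwardDirection {N : ℕ}
    {Ω U : Set (EuclideanSpace ℝ (Fin N))} {x : EuclideanSpace ℝ (Fin N)}
    {g : EuclideanSpace ℝ (Fin N) → ℝ} (h : IsC2LocalDefining Ω x U g) :
    ∃ b : Basis (Fin N) ℝ (EuclideanSpace ℝ (Fin N)), ∀ i, IsInwardDirection Ω x (b i) := by
  obtain ⟨hU, hxU, hg, hgrad, hΩ⟩ := h
  have hstrict : HasStrictFDerivAt g (fderiv ℝ g x) x :=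
    (hg.contDiffAt (hU.mem_nhds hxU)).hasStrictFDerivAt two_ne_zero
  have hneg : fderiv ℝ g x (-gradient g x) < 0 := by
    rw [map_neg, ← inner_gradient_left, neg_lt_zero]
    exact real_inner_self_pos.2 (hgrad x hxU)
  obtain ⟨b, hb⟩ := exists_basis_mem_of_isOpen finrank_euclideanSpace_fin
    (isOpen_lt (fderiv ℝ g x).continuous continuous_const) ⟨_, hneg⟩
  exact ⟨b, fun i => isInwardDirection_of_hasStrictFDerivAt (hU.mem_nhds hxU) hΩ hstrict (hb i)⟩

section Segment

variable {Ω : Set E} {w : E → F} {x v : E} {h : ℝ}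

theorem enorm_le_add_lintegral_fderiv_segment (hΩ : IsOpen Ω) (hw : ContDiffOn ℝ 1 w Ω)
    (hx : ∀ t ∈ Set.Icc 0 h, x + t • v ∈ Ω) {t : ℝ} (ht : t ∈ Set.Icc 0 h) :
    ‖w x‖ₑ ≤ ‖w (x + t • v)‖ₑ + ‖v‖ₑ * ∫⁻ s in Set.Icc 0 h, ‖fderiv ℝ w (x + s • v)‖ₑ := by
  have hsub : Set.Icc 0 t ⊆ Set.Icc 0 h := Set.Icc_subset_Icc_right ht.2
  have hderiv : ∀ s ∈ Set.Icc 0 t,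
      HasDerivAt (fun s : ℝ => w (x + s • v)) (fderiv ℝ w (x + s • v) v) s := fun s hs =>
    ((hw.contDiffAt (hΩ.mem_nhds (hx s (hsub hs)))).differentiableAt
      one_ne_zero).hasFDerivAt.comp_hasDerivAt s
      (by simpa using ((hasDerivAt_id s).smul_const v).const_add x)
  have hincrement : ‖w (x + t • v) - w x‖ₑ ≤
      ‖v‖ₑ * ∫⁻ s in Set.Icc 0 h, ‖fderiv ℝ w (x + s • v)‖ₑ := by
    calc ‖w (x + t • v) - w x‖ₑ
        ≤ ∫⁻ s in Set.Icc 0 t, ‖deriv (fun s : ℝ => w (x + s • v)) s‖ₑ := by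
          simpa using enorm_sub_le_lintegral_deriv_of_contDiffOn_Icc
            (f := fun s : ℝ => w (x + s • v))
            (hw.comp (by fun_prop) fun s hs => hx s (hsub hs)) ht.1
      _ ≤ ∫⁻ s in Set.Icc 0 t, ‖v‖ₑ * ‖fderiv ℝ w (x + s • v)‖ₑ := by
          refine setLIntegral_mono' measurableSet_Icc fun s hs => ?_
          rw [(hderiv s hs).deriv, mul_comm]
          exact ContinuousLinearMap.le_opENorm _ _
      _ ≤ ∫⁻ s in Set.Icc 0 h, ‖v‖ₑ * ‖fderiv ℝ w (x + s • v)‖ₑ := lintegral_mono_set hsub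
      _ = _ := lintegral_const_mul' _ _ enorm_ne_top
  calc ‖w x‖ₑ = ‖w (x + t • v) - (w (x + t • v) - w x)‖ₑ := by rw [sub_sub_cancel]
    _ ≤ ‖w (x + t • v)‖ₑ + ‖w (x + t • v) - w x‖ₑ := enorm_sub_le
    _ ≤ _ := by gcongr

theorem enorm_le_mul_lintegral_segment (hΩ : IsOpen Ω) (hw : ContDiffOn ℝ 1 w Ω) (hh : 0 < h)
    (hx : ∀ t ∈ Set.Icc 0 h, x + t • v ∈ Ω) :
    ‖w x‖ₑ ≤ ((ENNReal.ofReal h)⁻¹ + ‖v‖ₑ) *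
      ∫⁻ t in Set.Icc 0 h, (‖w (x + t • v)‖ₑ + ‖fderiv ℝ w (x + t • v)‖ₑ) := by
  set A := ∫⁻ t in Set.Icc 0 h, ‖w (x + t • v)‖ₑ
  set D := ∫⁻ t in Set.Icc 0 h, ‖fderiv ℝ w (x + t • v)‖ₑ
  have hw_meas : AEMeasurable (fun t : ℝ => ‖w (x + t • v)‖ₑ)
      (volume.restrict (Set.Icc 0 h)) :=
    (hw.continuousOn.comp (by fun_prop) hx).enorm.aemeasurable measurableSet_Icc
  have haverage : ENNReal.ofReal h * ‖w x‖ₑ ≤ A + ENNReal.ofReal h * (‖v‖ₑ * D) := by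
    calc ENNReal.ofReal h * ‖w x‖ₑ = ∫⁻ _ in Set.Icc 0 h, ‖w x‖ₑ := by simp [mul_comm]
      _ ≤ ∫⁻ t in Set.Icc 0 h, (‖w (x + t • v)‖ₑ + ‖v‖ₑ * D) :=
          setLIntegral_mono' measurableSet_Icc fun t ht =>
            enorm_le_add_lintegral_fderiv_segment hΩ hw hx ht
      _ = _ := by rw [lintegral_add_left' hw_meas]; simp [A, mul_comm]
  have hh0 : ENNReal.ofReal h ≠ 0 := (ENNReal.ofReal_pos.2 hh).ne'
  calc ‖w x‖ₑ = (ENNReal.ofReal h)⁻¹ * (ENNReal.ofReal h * ‖w x‖ₑ) := by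
        rw [← mul_assoc, ENNReal.inv_mul_cancel hh0 ENNReal.ofReal_ne_top, one_mul]
    _ ≤ (ENNReal.ofReal h)⁻¹ * (A + ENNReal.ofReal h * (‖v‖ₑ * D)) := by gcongr
    _ = (ENNReal.ofReal h)⁻¹ * A + ‖v‖ₑ * D := by
        rw [mul_add, ← mul_assoc _ (ENNReal.ofReal h),
          ENNReal.inv_mul_cancel hh0 ENNReal.ofReal_ne_top, one_mul]
    _ ≤ ((ENNReal.ofReal h)⁻¹ + ‖v‖ₑ) * A + ((ENNReal.ofReal h)⁻¹ + ‖v‖ₑ) * D := by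
        gcongr
        exacts [le_self_add, le_add_self]
    _ = _ := by rw [← mul_add, lintegral_add_left' hw_meas]

end Segment

theorem enorm_rpow_le_mul_prod_lintegral_lines {ι : Type*} [Fintype ι] {v : ι → E} {p : ℝ}
    (hp : Real.HolderConjugate (Fintype.card ι) p) {Ω : Set E} (hΩ : IsOpen Ω) {w : E → F}
    (hw : ContDiffOn ℝ 1 w Ω) {x : E} {h : ℝ} (hh : 0 < h)
    (hx : ∀ i, ∀ t ∈ Set.Icc 0 h, x + t • v i ∈ Ω) :
    ‖w x‖ₑ ^ p ≤ ((ENNReal.ofReal h)⁻¹ + ∑ i, ‖v i‖ₑ) ^ p *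
      ∏ i, (∫⁻ t : ℝ, Ω.indicator (fun y => ‖w y‖ₑ + ‖fderiv ℝ w y‖ₑ) (x + t • v i)) ^
        (1 / (Fintype.card ι - 1 : ℝ)) := by
  set q : ℝ := 1 / (Fintype.card ι - 1)
  have hq : 0 ≤ q := one_div_nonneg.2 (sub_nonneg.2 hp.lt.le)
  have hpow : ∀ a : ℝ≥0∞, a ^ p = ∏ _i : ι, a ^ q := fun a => by
    rw [Finset.prod_const, Finset.card_univ, ← ENNReal.rpow_mul_natCast, hp.conjugate_eq,
      one_div_mul_eq_div]
  rw [hpow, hpow, ← Finset.prod_mul_distrib]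
  refine Finset.prod_le_prod' fun i _ => ?_
  rw [← ENNReal.mul_rpow_of_nonneg _ _ hq]
  refine ENNReal.rpow_le_rpow ((enorm_le_mul_lintegral_segment hΩ hw hh (hx i)).trans
    (mul_le_mul' (add_le_add le_rfl ?_) ?_)) hq
  · exact Finset.single_le_sum (f := fun i => ‖v i‖ₑ) (fun _ _ => zero_le) (Finset.mem_univ i)
  · refine le_trans (setLIntegral_mono' measurableSet_Icc fun t ht => ?_)
      (setLIntegral_le_lintegral (Set.Icc 0 h) _)
    exact (Set.indicator_of_mem (hx i t ht) fun y => ‖w y‖ₑ + ‖fderiv ℝ w y‖ₑ).ge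

variable [MeasurableSpace E] [BorelSpace E] {μ : Measure E}

theorem exists_lintegral_prod_lintegral_lines_le [μ.IsAddHaarMeasure] {ι : Type*} [Fintype ι]
    (b : Basis ι ℝ E) {p : ℝ} (hp : Real.HolderConjugate (Fintype.card ι) p) :
    ∃ K : ℝ≥0, ∀ f : E → ℝ≥0∞, Measurable f →
      ∫⁻ x, ∏ i, (∫⁻ t : ℝ, f (x + t • b i)) ^ (1 / (Fintype.card ι - 1 : ℝ)) ∂μ ≤
        K * (∫⁻ x, f x ∂μ) ^ p := by
  classical
  have := b.finiteDimensional_of_finite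
  let e : E ≃L[ℝ] ι → ℝ := b.equivFunL
  let c := μ.addHaarScalarFactor ((volume : Measure (ι → ℝ)).map e.symm)
  have hc0 : (c : ℝ≥0∞) ≠ 0 :=
    ENNReal.coe_ne_zero.2 (Measure.addHaarScalarFactor_pos_of_isAddHaarMeasure _ _).ne'
  have hμ : μ = c • (volume : Measure (ι → ℝ)).map e.symm := Measure.isAddLeftInvariant_eq_smul _ _
  have lintegral_eq : ∀ g : E → ℝ≥0∞, ∫⁻ x, g x ∂μ = c * ∫⁻ a, g (e.symm a) := fun g => by
    rw [hμ]
    exact (lintegral_smul_measure ..).trans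
      (congrArg _ (lintegral_map_equiv g e.symm.toHomeomorph.toMeasurableEquiv))
  refine ⟨c * (c⁻¹) ^ p, fun f hf => ?_⟩
  have hline : ∀ a i, ∫⁻ t : ℝ, f (e.symm a + t • b i) =
      ∫⁻ t : ℝ, f (e.symm (Function.update a i t)) := fun a i => by
    rw [← lintegral_add_left_eq_self (fun t => f (e.symm (Function.update a i t))) (a i)]
    refine lintegral_congr fun t => congrArg f ?_
    have hupdate : Function.update a i (a i + t) = a + t • e (b i) := by
      ext j
      rcases eq_or_ne j i with rfl | hj <;> simp [e, *]
    rw [hupdate, map_add, map_smul, e.symm_apply_apply]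
  have hcancel : ((c⁻¹ : ℝ≥0) : ℝ≥0∞) * c = 1 := by
    rw [← ENNReal.coe_mul, inv_mul_cancel₀ (ENNReal.coe_ne_zero.1 hc0), ENNReal.coe_one]
  rw [lintegral_eq, lintegral_eq]
  simp only [hline]
  calc c * ∫⁻ a, ∏ i, (∫⁻ t : ℝ, f (e.symm (Function.update a i t))) ^
        (1 / (Fintype.card ι - 1 : ℝ))
      ≤ c * (∫⁻ a, f (e.symm a)) ^ p := by
        gcongr
        exact lintegral_prod_lintegral_pow_le (fun _ => volume) hp
          (hf.comp e.symm.continuous.measurable)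
    _ = c * (((c⁻¹ : ℝ≥0) : ℝ≥0∞) * (c * ∫⁻ a, f (e.symm a))) ^ p := by
        rw [← mul_assoc, hcancel, one_mul]
    _ = _ := by
        rw [ENNReal.mul_rpow_of_nonneg _ _ hp.symm.nonneg, ENNReal.coe_mul,
          ENNReal.coe_rpow_of_nonneg _ hp.symm.nonneg, mul_assoc]

theorem exists_lintegral_rpow_le_of_inward_segments [μ.IsAddHaarMeasure] {ι : Type*} [Fintype ι]
    (b : Basis ι ℝ E) {p : ℝ} (hp : Real.HolderConjugate (Fintype.card ι) p) {Ω S : Set E}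
    (hΩ : IsOpen Ω) {h : ℝ} (hh : 0 < h)
    (hS : ∀ x ∈ S, ∀ i, ∀ t ∈ Set.Icc 0 h, x + t • b i ∈ Ω) :
    ∃ K : ℝ≥0, ∀ w : E → F, ContDiffOn ℝ 1 w Ω →
      ∫⁻ x in S, ‖w x‖ₑ ^ p ∂μ ≤ K * (∫⁻ x in Ω, (‖w x‖ₑ + ‖fderiv ℝ w x‖ₑ) ∂μ) ^ p := by
  have := b.finiteDimensional_of_finite
  have := FiniteDimensional.proper_real E
  obtain ⟨K, hK⟩ := exists_lintegral_prod_lintegral_lines_le (μ := μ) b hp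
  let M : ℝ≥0∞ := (ENNReal.ofReal h)⁻¹ + ∑ i, ‖b i‖ₑ
  have hM : M ^ p ≠ ∞ := ENNReal.rpow_ne_top_of_nonneg hp.symm.nonneg <| ENNReal.add_ne_top.2
    ⟨ENNReal.inv_ne_top.2 (ENNReal.ofReal_pos.2 hh).ne',
      (ENNReal.sum_lt_top.2 fun _ _ => enorm_lt_top).ne⟩
  refine ⟨(M ^ p).toNNReal * K, fun w hw => ?_⟩
  let G : E → ℝ≥0∞ := Ω.indicator fun y => ‖w y‖ₑ + ‖fderiv ℝ w y‖ₑ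
  let P : E → ℝ≥0∞ := fun x =>
    ∏ i, (∫⁻ t : ℝ, G (x + t • b i)) ^ (1 / (Fintype.card ι - 1 : ℝ))
  have hG : Measurable G := by
    classical
    simp only [G, ← Set.piecewise_eq_indicator]
    exact (hw.continuousOn.enorm.add
      (hw.continuousOn_fderiv_of_isOpen hΩ le_rfl).enorm).measurable_piecewise
        continuousOn_const hΩ.measurableSet
  have hP : Measurable P := Finset.measurable_fun_prod _ fun i _ =>
    (Measurable.lintegral_prod_right' (f := fun z : E × ℝ => G (z.1 + z.2 • b i))
      (hG.comp (by fun_prop))).pow_const _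
  calc ∫⁻ x in S, ‖w x‖ₑ ^ p ∂μ
      ≤ ∫⁻ x in S, M ^ p * P x ∂μ :=
        setLIntegral_mono (hP.const_mul _) fun x hx =>
          enorm_rpow_le_mul_prod_lintegral_lines hp hΩ hw hh (hS x hx)
    _ ≤ ∫⁻ x, M ^ p * P x ∂μ := setLIntegral_le_lintegral _ _
    _ = M ^ p * ∫⁻ x, P x ∂μ := lintegral_const_mul' _ _ hM
    _ ≤ M ^ p * (K * (∫⁻ x, G x ∂μ) ^ p) := by gcongr; exact hK G hG
    _ = _ := by
        rw [ENNReal.coe_mul, ENNReal.coe_toNNReal hM, mul_assoc,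
          lintegral_indicator hΩ.measurableSet]

/-- The Sobolev embedding `W^{1,1}(Ω) ⊆ L^p(Ω)` with constant `K^{1/p}`, for `C¹` functions. Both
sides live in `[0, ∞]`, so that no integrability is presupposed. -/
def HasSobolevEmbedding (μ : Measure E) (p : ℝ) (K : ℝ≥0) (Ω : Set E) : Prop :=
  ∀ w : E → ℝ, ContDiffOn ℝ 1 w Ω →
    ∫⁻ x in Ω, ‖w x‖ₑ ^ p ∂μ ≤ K * (∫⁻ x in Ω, (‖w x‖ₑ + ‖fderiv ℝ w x‖ₑ) ∂μ) ^ p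

theorem exists_hasSobolevEmbedding [FiniteDimensional ℝ E] [μ.IsAddHaarMeasure] {ι : Type*}
    [Fintype ι] {p : ℝ} (hp : Real.HolderConjugate (Fintype.card ι) p) {Ω : Set E}
    (hΩ : IsOpen Ω) (hbdd : IsBounded Ω)
    (hinward : ∀ x ∈ closure Ω, ∃ b : Basis ι ℝ E, ∀ i, IsInwardDirection Ω x (b i)) :
    ∃ K, HasSobolevEmbedding μ p K Ω := by
  have := FiniteDimensional.proper_real E
  suffices h : ∃ K : ℝ≥0, ∀ w : E → ℝ, ContDiffOn ℝ 1 w Ω → ∫⁻ x in Ω ∩ closure Ω, ‖w x‖ₑ ^ p ∂μ ≤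
      K * (∫⁻ x in Ω, (‖w x‖ₑ + ‖fderiv ℝ w x‖ₑ) ∂μ) ^ p by
    rwa [Set.inter_eq_left.2 subset_closure] at h
  refine hbdd.isCompact_closure.induction_on
    (p := fun S => ∃ K : ℝ≥0, ∀ w : E → ℝ, ContDiffOn ℝ 1 w Ω → ∫⁻ x in Ω ∩ S, ‖w x‖ₑ ^ p ∂μ ≤
      K * (∫⁻ x in Ω, (‖w x‖ₑ + ‖fderiv ℝ w x‖ₑ) ∂μ) ^ p) ⟨0, by simp⟩ ?_ ?_ fun x hx => ?_
  · rintro S T hST ⟨K, hK⟩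
    exact ⟨K, fun w hw => (lintegral_mono_set (Set.inter_subset_inter_right _ hST)).trans (hK w hw)⟩
  · rintro S T ⟨K, hK⟩ ⟨L, hL⟩
    refine ⟨K + L, fun w hw => ?_⟩
    rw [Set.inter_union_distrib_left, ENNReal.coe_add, add_mul]
    exact (lintegral_union_le _ _ _).trans (add_le_add (hK w hw) (hL w hw))
  · obtain ⟨b, hb⟩ := hinward x hx
    obtain ⟨S, hS, h, hh, hseg⟩ := exists_nhdsWithin_forall_segment_mem hb
    obtain ⟨U, hU, hUS⟩ := mem_nhdsWithin_iff_exists_mem_nhds_inter.1 hS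
    exact ⟨U, mem_nhdsWithin_of_mem_nhds hU, exists_lintegral_rpow_le_of_inward_segments b hp hΩ hh
      fun y hy => hseg y (hUS ⟨hy.2, hy.1⟩)⟩

end SobolevEmbedding

section Moments

theorem sq_lintegral_mul_le {α : Type*} [MeasurableSpace α] {μ : Measure α} {f g : α → ℝ≥0∞}
    (hf : AEMeasurable f μ) (hg : AEMeasurable g μ) :
    (∫⁻ x, f x * g x ∂μ) ^ 2 ≤ (∫⁻ x, f x ^ 2 ∂μ) * ∫⁻ x, g x ^ 2 ∂μ := by
  have hsqrt : ∀ a : ℝ≥0∞, (a ^ (1 / 2 : ℝ)) ^ 2 = a := fun a => by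
    rw [← ENNReal.rpow_mul_natCast]; norm_num
  have h := pow_le_pow_left'
    (ENNReal.lintegral_mul_le_Lp_mul_Lq μ Real.HolderConjugate.two_two hf hg) 2
  simpa only [mul_pow, hsqrt, Pi.mul_apply, ENNReal.rpow_two] using h

theorem sq_add_mul_le {n : ℕ} (hn : n ≠ 0) (a b : ℝ≥0∞) :
    (a + n * b) ^ 2 ≤ 2 * n ^ 2 * (a ^ 2 + b ^ 2) := by
  have hn1 : (1 : ℝ≥0∞) ≤ n := Nat.one_le_cast.2 (Nat.one_le_iff_ne_zero.2 hn)
  calc (a + n * b) ^ 2 ≤ (n * a + n * b) ^ 2 := by gcongr; exact le_mul_of_one_le_left' hn1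
    _ = n ^ 2 * (a + b) ^ 2 := by ring
    _ ≤ n ^ 2 * (2 * (a ^ 2 + b ^ 2)) := by
        gcongr
        simpa [ENNReal.rpow_two, show (2 : ℝ) - 1 = 1 by norm_num] using
          ENNReal.rpow_add_le_mul_rpow_add_rpow a b one_le_two
    _ = 2 * n ^ 2 * (a ^ 2 + b ^ 2) := by ring

variable {E : Type*} [NormedAddCommGroup E] [NormedSpace ℝ E]

theorem enorm_fderiv_pow_succ {u : E → ℝ} {x : E} (hu : DifferentiableAt ℝ u x) (n : ℕ) :
    ‖fderiv ℝ (fun y => u y ^ (n + 1)) x‖ₑ = ‖u x‖ₑ ^ n * ((n + 1 : ℕ) * ‖fderiv ℝ u x‖ₑ) := by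
  have hcast : ‖((n + 1 : ℕ) : ℝ)‖ₑ = (n + 1 : ℕ) := Real.enorm_natCast _
  rw [fderiv_fun_pow (n + 1) hu, Nat.add_sub_cancel, nsmul_eq_mul, enorm_smul, enorm_mul, hcast,
    enorm_pow]
  ring

variable [MeasurableSpace E] [BorelSpace E] {μ : Measure E} {Ω : Set E} {u : E → ℝ}

/-- The squared `H¹` norm `∫_Ω u² + |Du|²`, as an element of `[0, ∞]`. -/
noncomputable def sobolevEnergy (μ : Measure E) (Ω : Set E) (u : E → ℝ) : ℝ≥0∞ :=
  ∫⁻ x in Ω, (‖u x‖ₑ ^ 2 + ‖fderiv ℝ u x‖ₑ ^ 2) ∂μ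

theorem HasSobolevEmbedding.lintegral_pow_succ_le {K : ℝ≥0} (hK : HasSobolevEmbedding μ 2 K Ω)
    (hΩ : IsOpen Ω) (hu : ContDiffOn ℝ 1 u Ω) (n : ℕ) :
    ∫⁻ x in Ω, ‖u x‖ₑ ^ (2 * (n + 1)) ∂μ ≤
      2 * K * (n + 1 : ℕ) ^ 2 * sobolevEnergy μ Ω u * ∫⁻ x in Ω, ‖u x‖ₑ ^ (2 * n) ∂μ := by
  have hu_meas : AEMeasurable (fun x => ‖u x‖ₑ) (μ.restrict Ω) :=
    hu.continuousOn.enorm.aemeasurable hΩ.measurableSet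
  have hfderiv_meas : AEMeasurable (fun x => ‖fderiv ℝ u x‖ₑ) (μ.restrict Ω) :=
    (hu.continuousOn_fderiv_of_isOpen hΩ le_rfl).enorm.aemeasurable hΩ.measurableSet
  have hpow : ∫⁻ x in Ω, (‖u x ^ (n + 1)‖ₑ + ‖fderiv ℝ (fun y => u y ^ (n + 1)) x‖ₑ) ∂μ =
      ∫⁻ x in Ω, ‖u x‖ₑ ^ n * (‖u x‖ₑ + (n + 1 : ℕ) * ‖fderiv ℝ u x‖ₑ) ∂μ :=
    setLIntegral_congr_fun hΩ.measurableSet fun x hx => by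
      rw [enorm_fderiv_pow_succ ((hu.differentiableOn one_ne_zero).differentiableAt
        (hΩ.mem_nhds hx)), enorm_pow]
      ring
  calc ∫⁻ x in Ω, ‖u x‖ₑ ^ (2 * (n + 1)) ∂μ = ∫⁻ x in Ω, ‖u x ^ (n + 1)‖ₑ ^ (2 : ℝ) ∂μ := by
        simp only [enorm_pow, ENNReal.rpow_two, ← pow_mul, mul_comm 2]
    _ ≤ K * (∫⁻ x in Ω, ‖u x‖ₑ ^ n * (‖u x‖ₑ + (n + 1 : ℕ) * ‖fderiv ℝ u x‖ₑ) ∂μ) ^ 2 := by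
        rw [← hpow, ← ENNReal.rpow_two]; exact hK _ (hu.pow (n + 1))
    _ ≤ K * ((∫⁻ x in Ω, (‖u x‖ₑ ^ n) ^ 2 ∂μ) *
          ∫⁻ x in Ω, (‖u x‖ₑ + (n + 1 : ℕ) * ‖fderiv ℝ u x‖ₑ) ^ 2 ∂μ) := by
        gcongr
        exact sq_lintegral_mul_le (hu_meas.pow_const n) (hu_meas.add (hfderiv_meas.const_mul _))
    _ ≤ K * ((∫⁻ x in Ω, ‖u x‖ₑ ^ (2 * n) ∂μ) * (2 * (n + 1 : ℕ) ^ 2 * sobolevEnergy μ Ω u)) := by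
        rw [sobolevEnergy, ← lintegral_const_mul' (2 * ((n + 1 : ℕ) : ℝ≥0∞) ^ 2) _ (by finiteness)]
        simp only [← pow_mul, mul_comm 2 n]
        gcongr with x
        exact sq_add_mul_le n.succ_ne_zero _ _
    _ = _ := by ring

theorem HasSobolevEmbedding.lintegral_even_pow_le {K : ℝ≥0} (hK : HasSobolevEmbedding μ 2 K Ω)
    (hΩ : IsOpen Ω) (hu : ContDiffOn ℝ 1 u Ω) (n : ℕ) :
    ∫⁻ x in Ω, ‖u x‖ₑ ^ (2 * (n + 1)) ∂μ ≤
      (2 * K + 1) ^ (n + 1) * (n + 1).factorial ^ 2 * sobolevEnergy μ Ω u ^ (n + 1) := by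
  induction n with
  | zero =>
    calc ∫⁻ x in Ω, ‖u x‖ₑ ^ 2 ∂μ ≤ sobolevEnergy μ Ω u := lintegral_mono fun x => le_self_add
      _ ≤ (2 * K + 1) * sobolevEnergy μ Ω u := le_mul_of_one_le_left' le_add_self
      _ = _ := by simp
  | succ n ih =>
    calc ∫⁻ x in Ω, ‖u x‖ₑ ^ (2 * (n + 1 + 1)) ∂μ
        ≤ 2 * K * (n + 1 + 1 : ℕ) ^ 2 * sobolevEnergy μ Ω u *
          ∫⁻ x in Ω, ‖u x‖ₑ ^ (2 * (n + 1)) ∂μ := hK.lintegral_pow_succ_le hΩ hu (n + 1)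
      _ ≤ (2 * K + 1) * (n + 1 + 1 : ℕ) ^ 2 * sobolevEnergy μ Ω u *
          ((2 * K + 1) ^ (n + 1) * (n + 1).factorial ^ 2 * sobolevEnergy μ Ω u ^ (n + 1)) := by
          gcongr; exact le_self_add
      _ = _ := by rw [Nat.factorial_succ (n + 1)]; push_cast; ring

theorem HasSobolevEmbedding.sq_lintegral_pow_le {K : ℝ≥0} (hK : HasSobolevEmbedding μ 2 K Ω)
    (hΩ : IsOpen Ω) (hu : ContDiffOn ℝ 1 u Ω) (n : ℕ) :
    (∫⁻ x in Ω, ‖u x‖ₑ ^ (n + 2) ∂μ) ^ 2 ≤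
      (2 * K + 1) ^ (n + 2) * (n + 2).factorial ^ 2 * sobolevEnergy μ Ω u ^ (n + 2) := by
  have hu_meas : AEMeasurable (fun x => ‖u x‖ₑ) (μ.restrict Ω) :=
    hu.continuousOn.enorm.aemeasurable hΩ.measurableSet
  calc (∫⁻ x in Ω, ‖u x‖ₑ ^ (n + 2) ∂μ) ^ 2
      = (∫⁻ x in Ω, ‖u x‖ₑ ^ (n + 1) * ‖u x‖ₑ ∂μ) ^ 2 := by simp only [← pow_succ]
    _ ≤ (∫⁻ x in Ω, ‖u x‖ₑ ^ (2 * (n + 1)) ∂μ) * ∫⁻ x in Ω, ‖u x‖ₑ ^ (2 * (0 + 1)) ∂μ := by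
        simpa only [← pow_mul, mul_comm _ 2] using
          sq_lintegral_mul_le (hu_meas.pow_const (n + 1)) hu_meas
    _ ≤ ((2 * K + 1) ^ (n + 1) * (n + 1).factorial ^ 2 * sobolevEnergy μ Ω u ^ (n + 1)) *
          ((2 * K + 1) ^ (0 + 1) * (0 + 1).factorial ^ 2 * sobolevEnergy μ Ω u ^ (0 + 1)) := by
        gcongr <;> exact hK.lintegral_even_pow_le hΩ hu _
    _ = (2 * K + 1) ^ (n + 2) * (n + 1).factorial ^ 2 * sobolevEnergy μ Ω u ^ (n + 2) := by
        simp; ring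
    _ ≤ _ := by gcongr; exact one_le_two

theorem HasSobolevEmbedding.lintegral_pow_le {K : ℝ≥0} (hK : HasSobolevEmbedding μ 2 K Ω)
    (hΩ : IsOpen Ω) (hu : ContDiffOn ℝ 1 u Ω) {H : ℝ} (hH : 0 ≤ H)
    (henergy : sobolevEnergy μ Ω u ≤ ENNReal.ofReal (H ^ 2)) (n : ℕ) :
    ∫⁻ x in Ω, ‖u x‖ₑ ^ (n + 2) ∂μ ≤
      ENNReal.ofReal ((√(2 * K + 1) * H) ^ (n + 2) * (n + 2).factorial) := by
  have hconst : (2 * K + 1 : ℝ≥0∞) = ENNReal.ofReal (√(2 * K + 1) ^ 2) := by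
    rw [Real.sq_sqrt (by positivity), ENNReal.ofReal_add (by positivity) zero_le_one,
      ENNReal.ofReal_mul zero_le_two]
    simp
  rw [← ENNReal.pow_le_pow_left_iff two_ne_zero]
  calc (∫⁻ x in Ω, ‖u x‖ₑ ^ (n + 2) ∂μ) ^ 2
      ≤ (2 * K + 1) ^ (n + 2) * (n + 2).factorial ^ 2 * sobolevEnergy μ Ω u ^ (n + 2) :=
        hK.sq_lintegral_pow_le hΩ hu n
    _ ≤ (2 * K + 1) ^ (n + 2) * (n + 2).factorial ^ 2 * ENNReal.ofReal (H ^ 2) ^ (n + 2) := by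
        gcongr
    _ = _ := by
        rw [hconst, ENNReal.ofReal_mul (by positivity), ENNReal.ofReal_natCast,
          ENNReal.ofReal_pow (by positivity), ENNReal.ofReal_pow (by positivity),
          ENNReal.ofReal_pow (by positivity), ENNReal.ofReal_mul (by positivity)]
        ring

theorem HasSobolevEmbedding.integrableOn_pow {K : ℝ≥0} (hK : HasSobolevEmbedding μ 2 K Ω)
    (hΩ : IsOpen Ω) (hu : ContDiffOn ℝ 1 u Ω) (henergy : sobolevEnergy μ Ω u ≠ ∞) (n : ℕ) :
    IntegrableOn (fun x => u x ^ (n + 2)) Ω μ := by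
  refine ⟨(hu.continuousOn.pow (n + 2)).aestronglyMeasurable hΩ.measurableSet, ?_⟩
  rw [hasFiniteIntegral_iff_enorm]
  simp only [enorm_pow]
  refine (ENNReal.pow_lt_top_iff.1 ((hK.sq_lintegral_pow_le hΩ hu n).trans_lt ?_)).resolve_right
    two_ne_zero
  finiteness

theorem HasSobolevEmbedding.integral_abs_pow_le {K : ℝ≥0} (hK : HasSobolevEmbedding μ 2 K Ω)
    (hΩ : IsOpen Ω) (hu : ContDiffOn ℝ 1 u Ω) {H : ℝ} (hH : 0 ≤ H)
    (henergy : sobolevEnergy μ Ω u ≤ ENNReal.ofReal (H ^ 2)) (n : ℕ) :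
    ∫ x in Ω, |u x| ^ (n + 2) ∂μ ≤ (√(2 * K + 1) * H) ^ (n + 2) * (n + 2).factorial := by
  have hnorm : ∫ x in Ω, |u x| ^ (n + 2) ∂μ = (∫⁻ x in Ω, ‖u x‖ₑ ^ (n + 2) ∂μ).toReal := by
    simpa [enorm_pow] using integral_norm_eq_lintegral_enorm
      ((hu.continuousOn.pow (n + 2)).aestronglyMeasurable (μ := μ) hΩ.measurableSet)
  rw [hnorm]
  exact ENNReal.toReal_le_of_le_ofReal (by positivity)
    (hK.lintegral_pow_le hΩ hu hH henergy n)

end Moments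

section ExponentialTail

theorem hasSum_exp_tail (n : ℕ) (a : ℝ) :
    HasSum (fun k : ℕ => 1 / ((k + n).factorial : ℝ) * a ^ (k + n))
      (Real.exp a - ∑ i ∈ Finset.range n, a ^ i / i.factorial) := by
  have h := (hasSum_nat_add_iff' n).2 (NormedSpace.expSeries_div_hasSum_exp a)
  simpa only [one_div_mul_eq_div, Real.exp_eq_exp_ℝ] using h

theorem summable_and_tsum_le_of_le_pow_mul_factorial {m : ℕ → ℝ} {M : ℝ} {n : ℕ}
    (hM₀ : 0 ≤ M) (hM : M ≤ 1 / 2)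
    (hm₀ : ∀ k, 0 ≤ m k) (hm : ∀ k, m k ≤ M ^ (k + n) * (k + n).factorial) :
    Summable (fun k => 1 / ((k + n).factorial : ℝ) * m k) ∧
      ∑' k, 1 / ((k + n).factorial : ℝ) * m k ≤ 2 * M ^ n := by
  have hterm : ∀ k, 1 / ((k + n).factorial : ℝ) * m k ≤ M ^ n * (1 / 2) ^ k := fun k => by
    calc 1 / ((k + n).factorial : ℝ) * m k
        ≤ 1 / ((k + n).factorial : ℝ) * (M ^ (k + n) * (k + n).factorial) := by gcongr; exact hm k
      _ = M ^ n * M ^ k := by field_simp; ring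
      _ ≤ M ^ n * (1 / 2) ^ k := by gcongr
  have hgeometric : HasSum (fun k : ℕ => M ^ n * (1 / 2 : ℝ) ^ k) (M ^ n * 2) :=
    hasSum_geometric_two.mul_left _
  have hsum : Summable fun k => 1 / ((k + n).factorial : ℝ) * m k :=
    .of_nonneg_of_le (fun k => mul_nonneg (by positivity) (hm₀ k)) hterm hgeometric.summable
  exact ⟨hsum, (hsum.tsum_le_tsum hterm hgeometric.summable).trans_eq <|
    hgeometric.tsum_eq.trans (mul_comm _ _)⟩

variable {α : Type*} [MeasurableSpace α] {μ : Measure α}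

theorem abs_integral_exp_tail_le_tsum {f : α → ℝ} {n : ℕ}
    (hf : ∀ k, Integrable (fun x => f x ^ (k + n)) μ)
    (hsum : Summable fun k : ℕ => 1 / ((k + n).factorial : ℝ) * ∫ x, |f x| ^ (k + n) ∂μ) :
    |∫ x, (Real.exp (f x) - ∑ i ∈ Finset.range n, f x ^ i / i.factorial) ∂μ| ≤
      ∑' k : ℕ, 1 / ((k + n).factorial : ℝ) * ∫ x, |f x| ^ (k + n) ∂μ := by
  have hnorm : ∀ k : ℕ, ∫ x, ‖1 / ((k + n).factorial : ℝ) * f x ^ (k + n)‖ ∂μ =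
      1 / ((k + n).factorial : ℝ) * ∫ x, |f x| ^ (k + n) ∂μ := fun k => by
    rw [← integral_const_mul]
    simp
  have hexpand := hasSum_integral_of_summable_integral_norm
    (fun k => (hf k).const_mul (1 / ((k + n).factorial : ℝ))) (by simpa only [hnorm] using hsum)
  simp only [(hasSum_exp_tail n _).tsum_eq] at hexpand
  rw [← hexpand.tsum_eq, ← Real.norm_eq_abs]
  refine tsum_of_norm_bounded hsum.hasSum fun k => ?_
  rw [← hnorm]
  exact norm_integral_le_integral_norm _

end ExponentialTail

section Regularity

variable {E : Type*} [NormedAddCommGroup E] [NormedSpace ℝ E]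

theorem exists_norm_fderiv_le_of_isCompact {F : Type*} [NormedAddCommGroup F] [NormedSpace ℝ F]
    {K : Set E} {u : E → F} (hK : IsCompact K) (hu : ContDiffOn ℝ 1 u K) :
    ∃ B, ∀ x ∈ interior K, ‖fderiv ℝ u x‖ ≤ B := by
  suffices h : ∃ B, ∀ x ∈ K ∩ interior K, ‖fderiv ℝ u x‖ ≤ B by
    rwa [Set.inter_eq_right.2 interior_subset] at h
  refine hK.induction_on (p := fun S => ∃ B, ∀ x ∈ S ∩ interior K, ‖fderiv ℝ u x‖ ≤ B)
    ⟨0, by simp⟩ ?_ ?_ fun x hx => ?_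
  · rintro S T hST ⟨B, hB⟩
    exact ⟨B, fun x hx => hB x ⟨hST hx.1, hx.2⟩⟩
  · rintro S T ⟨B, hB⟩ ⟨B', hB'⟩
    refine ⟨max B B', fun x hx => hx.1.elim (fun hxS => ?_) fun hxT => ?_⟩
    · exact (hB x ⟨hxS, hx.2⟩).trans (le_max_left _ _)
    · exact (hB' x ⟨hxT, hx.2⟩).trans (le_max_right _ _)
  · obtain ⟨s, hs, -, -, f', hf', hcont⟩ :=
      (contDiffWithinAt_succ_iff_hasFDerivWithinAt' (n := 0) (by simp)).1
        (by simpa using hu x hx : ContDiffWithinAt ℝ (0 + 1) u K x)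
    rw [Set.insert_eq_of_mem hx] at hs
    have hnear : ∀ᶠ y in 𝓝[K] x, ‖f' y‖ < ‖f' x‖ + 1 :=
      hcont.continuousWithinAt.norm.eventually (gt_mem_nhds (lt_add_one _))
    refine ⟨s ∩ {y | ‖f' y‖ < ‖f' x‖ + 1}, inter_mem hs hnear, ‖f' x‖ + 1, ?_⟩
    rintro y ⟨⟨hys, hyB⟩, hyK⟩
    rw [((hf' y hys).hasFDerivAt (mem_interior_iff_mem_nhds.1 hyK)).fderiv]
    exact hyB.le

theorem integrableOn_norm_fderiv_sq [ProperSpace E] [MeasurableSpace E] [BorelSpace E]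
    {F : Type*} [NormedAddCommGroup F] [NormedSpace ℝ F] {μ : Measure E}
    [IsFiniteMeasureOnCompacts μ] {Ω : Set E} {u : E → F} (hΩ : IsOpen Ω)
    (hbdd : IsBounded Ω) (hu : ContDiffOn ℝ 1 u (closure Ω)) :
    IntegrableOn (fun x => ‖fderiv ℝ u x‖ ^ 2) Ω μ := by
  obtain ⟨B, hB⟩ := exists_norm_fderiv_le_of_isCompact hbdd.isCompact_closure hu
  have hcont : ContinuousOn (fun x => ‖fderiv ℝ u x‖ ^ 2) Ω :=
    ((hu.mono subset_closure).continuousOn_fderiv_of_isOpen hΩ le_rfl).norm.pow 2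
  refine IntegrableOn.of_bound hbdd.measure_lt_top
    (hcont.aestronglyMeasurable hΩ.measurableSet) (B ^ 2) ?_
  filter_upwards [ae_restrict_mem hΩ.measurableSet] with x hx
  rw [Real.norm_of_nonneg (by positivity)]
  exact pow_le_pow_left₀ (norm_nonneg _) (hB x (interior_maximal subset_closure hΩ hx)) 2

theorem norm_gradient {F : Type*} [NormedAddCommGroup F] [InnerProductSpace ℝ F] [CompleteSpace F]
    (u : F → ℝ) (x : F) : ‖gradient u x‖ = ‖fderiv ℝ u x‖ := by
  simp [gradient]

theorem sobolevEnergy_eq_ofReal_H1norm_sq {Ω : Set (EuclideanSpace ℝ (Fin 2))}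
    {u : EuclideanSpace ℝ (Fin 2) → ℝ} (hu : IntegrableOn (fun x => u x ^ 2) Ω)
    (hgrad : IntegrableOn (fun x => ‖gradient u x‖ ^ 2) Ω) :
    sobolevEnergy volume Ω u = ENNReal.ofReal (H1norm Ω u ^ 2) := by
  have hsum : IntegrableOn (fun x => u x ^ 2 + ‖gradient u x‖ ^ 2) Ω := hu.add hgrad
  rw [H1norm, Real.sq_sqrt (by positivity), ← integral_add hu hgrad,
    ofReal_integral_eq_lintegral_ofReal hsum (.of_forall fun _ => by positivity)]
  refine lintegral_congr fun x => ?_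
  rw [ENNReal.ofReal_add (by positivity) (by positivity), ← sq_abs,
    ENNReal.ofReal_pow (abs_nonneg _), ENNReal.ofReal_pow (norm_nonneg _), norm_gradient,
    ← Real.norm_eq_abs, ofReal_norm, ofReal_norm]

end Regularity

theorem stmt_18_general (Ω : Set (EuclideanSpace ℝ (Fin 2))) (hΩ_open : IsOpen Ω)
    (hΩ_bdd : IsBounded Ω)
    (hΩ_bdy : ∀ x ∈ frontier Ω, ∃ b : Module.Basis (Fin 2) ℝ (EuclideanSpace ℝ (Fin 2)),
      ∀ i, IsInwardDirection Ω x (b i)) :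
    ∃ C : ℝ, 0 < C ∧ ∃ s₀ : ℝ, 0 < s₀ ∧
      ∀ u : EuclideanSpace ℝ (Fin 2) → ℝ, ContDiffOn ℝ 1 u Ω →
        IntegrableOn (fun x => u x ^ 2) Ω → IntegrableOn (fun x => ‖gradient u x‖ ^ 2) Ω →
        H1norm Ω u ≤ s₀ →
        (∑' k : ℕ, (1 / ((k + 3).factorial : ℝ)) * ∫ x in Ω, |u x| ^ (k + 3)) ≤
            C * H1norm Ω u ^ 3 ∧
        |∫ x in Ω, (Real.exp (u x) - 1 - u x - u x ^ 2 / 2)| ≤ C * H1norm Ω u ^ 3 := by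
  obtain ⟨K, hK⟩ := exists_hasSobolevEmbedding (μ := volume) (p := 2)
    (by simpa using Real.HolderConjugate.two_two) hΩ_open hΩ_bdd
    fun _ => exists_basis_isInwardDirection_of_mem_closure
      (EuclideanSpace.basisFun (Fin 2) ℝ).toBasis hΩ_open hΩ_bdy
  set L : ℝ := √(2 * K + 1)
  have hL : 0 < L := by positivity
  refine ⟨2 * L ^ 3, by positivity, 1 / (2 * L), by positivity, fun u hu hu_sq hgrad hs => ?_⟩
  have hH : 0 ≤ H1norm Ω u := Real.sqrt_nonneg _
  have henergy := sobolevEnergy_eq_ofReal_H1norm_sq hu_sq hgrad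
  have hsmall : L * H1norm Ω u ≤ 1 / 2 :=
    (mul_le_mul_of_nonneg_left hs hL.le).trans_eq (by field_simp)
  obtain ⟨hsum, htsum⟩ := summable_and_tsum_le_of_le_pow_mul_factorial (n := 3)
    (m := fun k => ∫ x in Ω, |u x| ^ (k + 3)) (by positivity) hsmall (fun k => by positivity)
    fun k => hK.integral_abs_pow_le hΩ_open hu hH henergy.le (k + 1)
  have hexp := abs_integral_exp_tail_le_tsum (n := 3)
    (fun k => hK.integrableOn_pow hΩ_open hu (henergy ▸ ENNReal.ofReal_ne_top) (k + 1)) hsum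
  rw [mul_pow, ← mul_assoc] at htsum
  refine ⟨htsum, ?_⟩
  simpa [Finset.sum_range_succ, Nat.factorial, ← sub_sub] using hexp.trans htsum

/-- For a bounded open `Ω ⊆ ℝ²` with `C²` boundary there are constants
`C > 0` and `s₀ > 0` depending only on `Ω` such that every `u` of class `C¹` on
`closure Ω` with `‖u‖_{H¹} ≤ s₀` satisfies
`∑_{k=3}^∞ (1/k!) ∫_Ω |u|^k ≤ C ‖u‖_{H¹}³`, and in particular
`|∫_Ω (e^u - 1 - u - u²/2)| ≤ C ‖u‖_{H¹}³`. -/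
theorem stmt_18 (Ω : Set (EuclideanSpace ℝ (Fin 2))) (hΩ_open : IsOpen Ω)
    (hΩ_bdd : IsBounded Ω)
    (hΩ_bdy : ∀ x ∈ frontier Ω, ∃ U g, IsC2LocalDefining Ω x U g) :
    ∃ C : ℝ, 0 < C ∧ ∃ s₀ : ℝ, 0 < s₀ ∧
      ∀ u : EuclideanSpace ℝ (Fin 2) → ℝ, ContDiffOn ℝ 1 u (closure Ω) →
        H1norm Ω u ≤ s₀ →
        (∑' k : ℕ, (1 / ((k + 3).factorial : ℝ)) * ∫ x in Ω, |u x| ^ (k + 3)) ≤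
            C * H1norm Ω u ^ 3 ∧
        |∫ x in Ω, (Real.exp (u x) - 1 - u x - u x ^ 2 / 2)| ≤ C * H1norm Ω u ^ 3 := by
  refine (stmt_18_general Ω hΩ_open hΩ_bdd fun x hx => ?_).imp fun C ⟨hC, s₀, hs₀, h⟩ =>
    ⟨hC, s₀, hs₀, fun u hu => h u (hu.mono subset_closure) ?_ ?_⟩
  · obtain ⟨U, g, hg⟩ := hΩ_bdy x hx
    exact hg.exists_basis_isInwardDirection
  · exact ((hu.continuousOn.pow 2).integrableOn_compact hΩ_bdd.isCompact_closure).mono_set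
      subset_closure
  · simpa only [norm_gradient] using integrableOn_norm_fderiv_sq hΩ_open hΩ_bdd hu
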